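/- (Uniform localization from below.) Let ρ > 0, c > 0, x₀ ≥ 0, b₀ > 0, and let F : ℝ → ℝ be continuously differentiable with F(0) = 0 and −b₀ ≤ F'(y) ≤ 0 for all y ∈ ℝ. Fix K₁ ≥ 1 and K₂ > 0, and let L > ρ + 2c/ρ be a constant satisfying e^{L−ρ} − (2c/ρ)·e^{-L} ≥ 2c·K₂. For T ≥ 1 set η(T) = e^{-L·T}, and let N(T) = K₁·β_T^{-2}·e^{2ρ(T+β_T)} where β_T is the unique positive solution of log β + b₀·β = −T·b₀. Then η(T) < N(T), and for every T ≥ 1, every admissible control u and every trajectory x associated with u such that ∫₀^∞ e^{-ρt} u(t) dt ≤ K₁, ∫₀^∞ e^{-ρt} x(t) dt ≤ K₂, and t ↦ e^{-ρt}(log u(t) − c·x(t)²) is Lebesgue integrable on [0,∞), there exist an admissible control u' and a trajectory x' associated with u' such that u'(t) = max(min(u(t), N(T)), η(T)) for a.e. t ∈ [0,T], the function t ↦ e^{-ρt}(log u'(t) − c·x'(t)²) is Lebesgue integrable on [0,∞), and B(u',x') ≥ B(u,x). -/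

import Mathlib

open MeasureTheory Filter

/-- A control `u` is admissible: measurable, locally integrable on `[0,∞)`,
and positive almost everywhere on `[0,∞)`. -/
def Admissible (u : ℝ → ℝ) : Prop :=
  Measurable u ∧ (∀ T : ℝ, 0 < T → IntegrableOn u (Set.Icc 0 T)) ∧
    (∀ᵐ t ∂(volume.restrict (Set.Ici (0:ℝ))), 0 < u t)

/-- `x` is a trajectory associated with the control `u`, dynamics `F` and
initial state `x₀`. -/
def Trajectory (F : ℝ → ℝ) (x₀ : ℝ) (u x : ℝ → ℝ) : Prop :=
  ContinuousOn x (Set.Ici 0) ∧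
    ∀ t : ℝ, 0 ≤ t → x t = x₀ + ∫ s in (0:ℝ)..t, (F (x s) + u s)

/-- The objective functional `B(u,x) = ∫₀^∞ e^{-ρt}(log u(t) - c x(t)²) dt`. -/
noncomputable def objective (ρ c : ℝ) (u x : ℝ → ℝ) : ℝ :=
  ∫ t in Set.Ioi (0:ℝ), Real.exp (-ρ * t) * (Real.log (u t) - c * (x t) ^ 2)

/-- Integrability of the integrand of the objective functional. -/
def ObjIntegrable (ρ c : ℝ) (u x : ℝ → ℝ) : Prop :=
  IntegrableOn (fun t => Real.exp (-ρ * t) * (Real.log (u t) - c * (x t) ^ 2))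
    (Set.Ioi (0:ℝ))

/-!
Truncating `u` to `[η, N]` on `[0, T]` removes a total excess `D`. Adding to the control the
constant rate `D` on `(T, T + β]` makes up for it: the drift is nonincreasing with Lipschitz
constant `b₀`, so at most a fraction `1 - exp (-b₀ * t)` of the removed mass has flowed back by
time `t`, and `β = exp (-b₀ * (T + β))` is just small enough for the added mass `β * D` not to
overshoot the rest. Hence the new state exceeds the old one by no more than the mass `M ≤ η * T`
added below `η`.

The added rate `D` gains at least `D / N` in the logarithm, by convexity of `1 / v` and the budget
`K₁`, which covers the loss `D / N` caused by the upper truncation. The lower truncation gains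
`exp (-ρ * T) / η * M`, and `L` is chosen so large that this pays for the increase
`c * (2 * M * K₂ + M ^ 2 / ρ)` of the state cost.
-/

open Set

lemma mul_integral_exp_const_mul (c a b : ℝ) :
    c * ∫ t in a..b, Real.exp (c * t) = Real.exp (c * b) - Real.exp (c * a) := by
  rw [intervalIntegral.mul_integral_comp_mul_left, integral_exp]

lemma intervalIntegrable_of_Ici {f : ℝ → ℝ} {a b c : ℝ}
    (hf : LocallyIntegrableOn f (Ici c)) (ha : c ≤ a) (hb : c ≤ b) :
    IntervalIntegrable f volume a b :=
  (hf.integrableOn_compact_subset (ordConnected_Ici.uIcc_subset ha hb)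
    isCompact_uIcc).intervalIntegrable

lemma monotone_intervalIntegral_of_nonneg {f : ℝ → ℝ}
    (hf : ∀ a b, IntervalIntegrable f volume a b) (hf0 : 0 ≤ f) (a : ℝ) :
    Monotone fun t ↦ ∫ r in a..t, f r := fun s t hst ↦ by
  rw [← sub_nonneg, intervalIntegral.integral_interval_sub_left (hf a t) (hf a s)]
  exact intervalIntegral.integral_nonneg hst fun r _ ↦ hf0 r

section Comparison

variable {F : ℝ → ℝ} {a b : ℝ}

lemma nonneg_of_le_of_forall_neg {h : ℝ → ℝ} (hab : a ≤ b) (hh : ContinuousOn h (Icc a b))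
    (ha : 0 ≤ h a) (hle : ∀ s ∈ Icc a b, (∀ r ∈ Ioc s b, h r < 0) → h s ≤ h b) : 0 ≤ h b := by
  have hcompact : IsCompact (Icc a b ∩ h ⁻¹' Ici 0) :=
    isCompact_Icc.of_isClosed_subset (hh.preimage_isClosed_of_isClosed isClosed_Icc isClosed_Ici)
      inter_subset_left
  obtain ⟨s, ⟨hs, hs0⟩, hmax⟩ := hcompact.exists_isGreatest ⟨a, left_mem_Icc.2 hab, ha⟩
  refine hs0.trans (hle s hs fun r hr ↦ ?_)
  by_contra! hr0
  exact hr.1.not_ge (hmax ⟨⟨hs.1.trans hr.1.le, hr.2⟩, hr0⟩)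

lemma le_of_antitone_of_sub_le_integral {w z : ℝ → ℝ} (hF : Antitone F) (hab : a ≤ b)
    (hw : ContinuousOn w (Icc a b)) (hz : ContinuousOn z (Icc a b)) (ha : w a ≤ z a)
    (hwz : ∀ s ∈ Icc a b, (w b - w s) - (z b - z s) ≤ ∫ r in s..b, (F (w r) - F (z r))) :
    w b ≤ z b := by
  refine sub_nonneg.1 <| nonneg_of_le_of_forall_neg (h := fun t ↦ z t - w t) hab (hz.sub hw)
    (sub_nonneg.2 ha) fun s hs hneg ↦ ?_
  have hint : ∫ r in s..b, (F (w r) - F (z r)) ≤ 0 := by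
    rw [intervalIntegral.integral_of_le hs.2]
    exact setIntegral_nonpos measurableSet_Ioc fun r hr ↦
      sub_nonpos.2 (hF (sub_neg.1 (hneg r hr)).le)
  linarith [hwz s hs]

end Comparison

lemma Admissible.locallyIntegrableOn {u : ℝ → ℝ} (hu : Admissible u) :
    LocallyIntegrableOn u (Ici 0) := by
  refine (locallyIntegrableOn_iff isClosed_Ici.isLocallyClosed).2 fun k hk hcompact ↦ ?_
  obtain ⟨T, hT⟩ := hcompact.bddAbove
  exact (hu.2.1 (max T 1) (by positivity)).mono_set fun t ht ↦
    ⟨hk ht, (hT ht).trans (le_max_left _ _)⟩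

namespace Trajectory

variable {F u x : ℝ → ℝ} {x₀ a b : ℝ}

lemma intervalIntegrable_drift (hx : Trajectory F x₀ u x) (hF : Continuous F) (ha : 0 ≤ a)
    (hb : 0 ≤ b) : IntervalIntegrable (fun s ↦ F (x s)) volume a b :=
  ((hF.comp_continuousOn hx.1).mono
    (ordConnected_Ici.uIcc_subset ha hb)).intervalIntegrable

lemma apply_zero (hx : Trajectory F x₀ u x) : x 0 = x₀ := by
  simpa only [intervalIntegral.integral_same, add_zero] using hx.2 0 le_rfl

lemma sub_eq_integral (hx : Trajectory F x₀ u x) (hF : Continuous F)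
    (hu : LocallyIntegrableOn u (Ici 0)) (ha : 0 ≤ a) (hb : 0 ≤ b) :
    x b - x a = ∫ s in a..b, (F (x s) + u s) := by
  have hint {t : ℝ} (ht : 0 ≤ t) :
      IntervalIntegrable (fun s ↦ F (x s) + u s) volume 0 t :=
    (hx.intervalIntegrable_drift hF le_rfl ht).add (intervalIntegrable_of_Ici hu le_rfl ht)
  rw [hx.2 b hb, hx.2 a ha, add_sub_add_left_eq_sub,
    intervalIntegral.integral_interval_sub_left (hint hb) (hint ha)]

lemma nonneg (hx : Trajectory F x₀ u x) (hF : Continuous F) (hanti : Antitone F) (hF0 : 0 ≤ F 0)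
    (hx₀ : 0 ≤ x₀) (hu : LocallyIntegrableOn u (Ici 0))
    (hu0 : ∀ᵐ t ∂volume.restrict (Ici 0), 0 ≤ u t) {t : ℝ} (ht : 0 ≤ t) : 0 ≤ x t := by
  refine le_of_antitone_of_sub_le_integral hanti ht continuousOn_const
    (hx.1.mono Icc_subset_Ici_self) (hx.apply_zero ▸ hx₀) fun s hs ↦ ?_
  have hdrift := hx.intervalIntegrable_drift hF hs.1 ht
  rw [hx.sub_eq_integral hF hu hs.1 ht, sub_self, zero_sub, ← intervalIntegral.integral_neg]
  refine intervalIntegral.integral_mono_ae_restrict hs.2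
    (hdrift.add (intervalIntegrable_of_Ici hu hs.1 ht)).neg
    (intervalIntegrable_const.sub hdrift) ?_
  filter_upwards [ae_restrict_of_ae_restrict_of_subset
    ((Icc_subset_Icc_left hs.1).trans Icc_subset_Ici_self) hu0] with r hr
  linarith

end Trajectory

section VolterraEquation

open scoped BoundedContinuousFunction NNReal

variable {E : Type*} [NormedAddCommGroup E] [NormedSpace ℝ E] {F : E → E} {K : ℝ≥0} {W : ℝ → ℝ}

lemma norm_integral_sub_integral_le_of_weight (hF : LipschitzWith K F) (hW : Continuous W)
    {x y : ℝ → E} (hx : Continuous x) (hy : Continuous y) {d t : ℝ} (hd : 0 ≤ d) (ht : 0 ≤ t)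
    (hWt : (K + 1) * ∫ s in 0..t, W s ≤ W t) (hxy : ∀ s ∈ Icc 0 t, ‖x s - y s‖ ≤ d * W s) :
    ‖(∫ s in 0..t, F (x s)) - ∫ s in 0..t, F (y s)‖ ≤ K / (K + 1) * d * W t := by
  have hFi {z : ℝ → E} (hz : Continuous z) : IntervalIntegrable (fun s ↦ F (z s)) volume 0 t :=
    (hF.continuous.comp hz).intervalIntegrable _ _
  have hle {s : ℝ} (hs : s ∈ Icc 0 t) : ‖F (x s) - F (y s)‖ ≤ K * (d * W s) :=
    (hF.norm_sub_le _ _).trans (by gcongr; exact hxy s hs)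
  calc ‖(∫ s in 0..t, F (x s)) - ∫ s in 0..t, F (y s)‖
      = ‖∫ s in 0..t, (F (x s) - F (y s))‖ := by
        rw [intervalIntegral.integral_sub (hFi hx) (hFi hy)]
    _ ≤ ∫ s in 0..t, K * (d * W s) :=
      intervalIntegral.norm_integral_le_of_norm_le ht
        (.of_forall fun s hs ↦ hle (Ioc_subset_Icc_self hs))
        ((by fun_prop : Continuous fun s ↦ K * (d * W s)).intervalIntegrable _ _)
    _ = K / (K + 1) * d * ((K + 1) * ∫ s in 0..t, W s) := by
      rw [intervalIntegral.integral_const_mul, intervalIntegral.integral_const_mul]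
      field_simp
    _ ≤ K / (K + 1) * d * W t := by gcongr

/- Picard iteration is a contraction for the norm `sup ‖x t‖ / W t`. -/
lemma exists_eq_add_integral_of_weight [CompleteSpace E] (hF : LipschitzWith K F)
    (hW : Continuous W) (hWpos : ∀ t, 0 ≤ t → 0 < W t)
    (hWint : ∀ t, 0 ≤ t → (K + 1) * ∫ s in 0..t, W s ≤ W t) {g : ℝ → E} (hg : Continuous g)
    {C : ℝ} (hgW : ∀ t, 0 ≤ t → ‖g t + ∫ _ in 0..t, F 0‖ ≤ C * W t) :
    ∃ x : ℝ → E, Continuous x ∧ ∀ t, 0 ≤ t → x t = g t + ∫ s in 0..t, F (x s) := by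
  let X (y : ℝ≥0 →ᵇ E) (s : ℝ) : E := W s • y s.toNNReal
  have hX (y) : Continuous (X y) := by fun_prop
  let P (y : ℝ≥0 →ᵇ E) (t : ℝ) : E := g t + ∫ s in 0..t, F (X y s)
  have hP (y) : Continuous (P y) := hg.add <| intervalIntegral.continuous_primitive
    (fun _ _ ↦ (hF.continuous.comp (hX y)).intervalIntegrable _ _) 0
  have hPsub (y z) (t : ℝ) (ht : 0 ≤ t) : ‖P y t - P z t‖ ≤ K / (K + 1) * dist y z * W t := by
    rw [add_sub_add_left_eq_sub]
    refine norm_integral_sub_integral_le_of_weight hF hW (hX y) (hX z) dist_nonneg ht (hWint t ht)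
      fun s hs ↦ ?_
    rw [← smul_sub, norm_smul, Real.norm_of_nonneg (hWpos s hs.1).le, mul_comm, ← dist_eq_norm]
    gcongr
    exacts [(hWpos s hs.1).le, BoundedContinuousFunction.dist_coe_le_dist _]
  have hPbound (y) (t : ℝ≥0) : ‖(W t)⁻¹ • P y t‖ ≤ C + K / (K + 1) * dist y 0 := by
    rw [norm_smul, norm_inv, Real.norm_of_nonneg (hWpos t t.2).le, inv_mul_le_iff₀ (hWpos t t.2)]
    have h0 : ‖P 0 t‖ ≤ C * W t := by simpa [P, X] using hgW t t.2
    linarith [norm_le_norm_add_norm_sub' (P y t) (P 0 t), hPsub y 0 t t.2]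
  let Φ (y : ℝ≥0 →ᵇ E) : ℝ≥0 →ᵇ E := BoundedContinuousFunction.ofNormedAddCommGroup
    (fun t ↦ (W t)⁻¹ • P y t)
    (((hW.comp NNReal.continuous_coe).inv₀ fun t ↦ (hWpos t t.2).ne').smul
      ((hP y).comp NNReal.continuous_coe)) _ (hPbound y)
  have hΦ : ContractingWith (K / (K + 1)) Φ := by
    refine ⟨(div_lt_one (by positivity)).2 (by simp), LipschitzWith.of_dist_le_mul fun y z ↦
      BoundedContinuousFunction.dist_le_iff_of_nonempty.2 fun t ↦ ?_⟩
    rw [dist_eq_norm]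
    change ‖(W t)⁻¹ • P y t - (W t)⁻¹ • P z t‖ ≤ _
    rw [← smul_sub, norm_smul, norm_inv, Real.norm_of_nonneg (hWpos t t.2).le,
      inv_mul_le_iff₀ (hWpos t t.2), mul_comm]
    exact_mod_cast hPsub y z t t.2
  let y := ContractingWith.fixedPoint Φ hΦ
  refine ⟨X y, hX y, fun t ht ↦ ?_⟩
  have hfix : (W t.toNNReal)⁻¹ • P y t.toNNReal = y t.toNNReal :=
    DFunLike.congr_fun hΦ.fixedPoint_isFixedPt t.toNNReal
  rw [Real.coe_toNNReal t ht] at hfix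
  exact ((inv_smul_eq_iff₀ (hWpos t ht).ne').1 hfix).symm

lemma mul_integral_exp_mul_le_of_monotone {m : ℝ → ℝ} {c t : ℝ} (hc : 0 ≤ c) (ht : 0 ≤ t)
    (hm : Continuous m) (hmono : Monotone m) (hm0 : 0 ≤ m t) :
    c * ∫ s in 0..t, Real.exp (c * s) * m s ≤ Real.exp (c * t) * m t := calc
  c * ∫ s in 0..t, Real.exp (c * s) * m s ≤ c * ∫ s in 0..t, Real.exp (c * s) * m t := by
    gcongr
    refine intervalIntegral.integral_mono_on ht (Continuous.intervalIntegrable (by fun_prop) _ _)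
      (Continuous.intervalIntegrable (by fun_prop) _ _) fun s hs ↦ ?_
    gcongr
    exact hmono hs.2
  _ = (Real.exp (c * t) - 1) * m t := by
    rw [intervalIntegral.integral_mul_const, ← mul_assoc, mul_integral_exp_const_mul, mul_zero,
      Real.exp_zero]
  _ ≤ Real.exp (c * t) * m t := by
    gcongr
    linarith

lemma exists_eq_add_integral_of_norm_le [CompleteSpace E] (hF : LipschitzWith K F) {g : ℝ → E}
    (hg : Continuous g) {m : ℝ → ℝ} (hm : Continuous m) (hmono : Monotone m)
    (hgm : ∀ t, 0 ≤ t → ‖g t‖ ≤ m t) :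
    ∃ x : ℝ → E, Continuous x ∧ ∀ t, 0 ≤ t → x t = g t + ∫ s in 0..t, F (x s) := by
  have hm0 {t} (ht : 0 ≤ t) : 0 ≤ m t := (norm_nonneg _).trans (hgm t ht)
  refine exists_eq_add_integral_of_weight (W := fun t ↦ Real.exp ((K + 1) * t) * (1 + m t))
    (C := 1 + ‖F 0‖) hF (by fun_prop)
    (fun t ht ↦ mul_pos (Real.exp_pos _) (by linarith [hm0 ht]))
    (fun t ht ↦ mul_integral_exp_mul_le_of_monotone (by positivity) ht (by fun_prop)
      (hmono.const_add 1) (by linarith [hm0 ht])) hg fun t ht ↦ ?_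
  have hexp : 1 + t ≤ Real.exp ((K + 1) * t) := by
    have hKt : 0 ≤ K * t := by positivity
    linarith [Real.add_one_le_exp ((K + 1) * t)]
  have hW : (1 + t) * (1 + m t) ≤ Real.exp ((K + 1) * t) * (1 + m t) := by
    have := hm0 ht
    gcongr
  have htm : 0 ≤ t * m t := mul_nonneg ht (hm0 ht)
  calc ‖g t + ∫ _ in 0..t, F 0‖ ≤ m t + t * ‖F 0‖ := by
        refine (norm_add_le _ _).trans (add_le_add (hgm t ht) ?_)
        rw [intervalIntegral.integral_const, sub_zero, norm_smul, Real.norm_of_nonneg ht]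
    _ ≤ Real.exp ((K + 1) * t) * (1 + m t) + Real.exp ((K + 1) * t) * (1 + m t) * ‖F 0‖ := by
        gcongr <;> linarith [hm0 ht]
    _ = (1 + ‖F 0‖) * (Real.exp ((K + 1) * t) * (1 + m t)) := by ring

end VolterraEquation

lemma exists_trajectory {F u : ℝ → ℝ} {K : NNReal} (x₀ : ℝ) (hF : LipschitzWith K F)
    (hu : LocallyIntegrableOn u (Ici 0)) : ∃ x, Trajectory F x₀ u x := by
  have hv (a b) : IntervalIntegrable ((Ici 0).indicator u) volume a b := by
    refine intervalIntegrable_iff.2 ((integrableOn_indicator_iff measurableSet_Ici).2 ?_)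
    exact (hu.integrableOn_compact_subset inter_subset_left
      (isCompact_uIcc.inter_left isClosed_Ici)).mono_set
      (inter_subset_inter_right _ uIoc_subset_uIcc)
  have hvu {t} (ht : 0 ≤ t) : ∫ s in 0..t, (Ici 0).indicator u s = ∫ s in 0..t, u s :=
    intervalIntegral.integral_congr fun s hs ↦
      indicator_of_mem (ordConnected_Ici.uIcc_subset (mem_Ici.2 le_rfl) ht hs) u
  obtain ⟨x, hx, heq⟩ := exists_eq_add_integral_of_norm_le hF
    (continuous_const.add (intervalIntegral.continuous_primitive hv 0))
    (continuous_const.add (intervalIntegral.continuous_primitive (fun a b ↦ (hv a b).norm) 0))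
    ((monotone_intervalIntegral_of_nonneg (fun a b ↦ (hv a b).norm)
      (fun s ↦ norm_nonneg _) 0).const_add ‖x₀‖)
    fun t ht ↦ (norm_add_le x₀ _).trans
      (add_le_add_right (intervalIntegral.norm_integral_le_integral_norm ht) _)
  refine ⟨x, hx.continuousOn, fun t ht ↦ ?_⟩
  have hFx : IntervalIntegrable (fun s ↦ F (x s)) volume 0 t :=
    (hF.continuous.comp hx).intervalIntegrable _ _
  rw [heq t ht, Pi.add_apply, hvu ht, add_assoc, intervalIntegral.integral_add hFx
    (intervalIntegrable_of_Ici hu le_rfl ht), add_comm (∫ s in 0..t, u s)]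

lemma apply_add_sub_le_of_antitone_of_lipschitzWith {F : ℝ → ℝ} {K : NNReal} (hanti : Antitone F)
    (hlip : LipschitzWith K F) {y q θ : ℝ} (hq : 0 ≤ q) (hθ : 0 ≤ θ) :
    F (y + q - θ) ≤ F y + K * θ := by
  have hdist := (le_abs_self _).trans (hlip.dist_le_mul (y - θ) y)
  rw [Real.dist_eq, sub_sub_cancel_left, abs_neg, abs_of_nonneg hθ] at hdist
  linarith [hanti (show y - θ ≤ y + q - θ by linarith)]

namespace Trajectory

variable {F u u' x x' : ℝ → ℝ} {x₀ x₀' a b : ℝ} {K : NNReal}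

lemma sub_sub_sub_eq_integral (hx : Trajectory F x₀ u x) (hx' : Trajectory F x₀' u' x')
    (hF : Continuous F) (hu : LocallyIntegrableOn u (Ici 0))
    (hu' : LocallyIntegrableOn u' (Ici 0)) (ha : 0 ≤ a) (hb : 0 ≤ b) :
    (x' b - x' a) - (x b - x a) = ∫ r in a..b, ((F (x' r) - F (x r)) + (u' r - u r)) := by
  rw [hx.sub_eq_integral hF hu ha hb, hx'.sub_eq_integral hF hu' ha hb,
    ← intervalIntegral.integral_sub
      ((hx'.intervalIntegrable_drift hF ha hb).add (intervalIntegrable_of_Ici hu' ha hb))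
      ((hx.intervalIntegrable_drift hF ha hb).add (intervalIntegrable_of_Ici hu ha hb))]
  simp only [add_sub_add_comm]

/- The function `x + Q - θ` is a supersolution of the equation solved by `x'`, because
`F (x + Q - θ) ≤ F x + K * θ`. -/
lemma le_add_sub {Q θ : ℝ → ℝ} (hx : Trajectory F x₀ u x) (hx' : Trajectory F x₀' u' x')
    (hanti : Antitone F) (hlip : LipschitzWith K F) (hu : LocallyIntegrableOn u (Ici 0))
    (hu' : LocallyIntegrableOn u' (Ici 0)) (ha : 0 ≤ a) (hab : a ≤ b)
    (hQ : ContinuousOn Q (Icc a b)) (hθ : ContinuousOn θ (Icc a b))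
    (hQ0 : ∀ t ∈ Icc a b, 0 ≤ Q t) (hθ0 : ∀ t ∈ Icc a b, 0 ≤ θ t)
    (hincr : ∀ s ∈ Icc a b, ∫ r in s..b, (u' r - u r + K * θ r) ≤ (Q b - θ b) - (Q s - θ s))
    (hinit : x' a ≤ x a + Q a - θ a) : x' b ≤ x b + Q b - θ b := by
  have hsub : Icc a b ⊆ Ici 0 := (Icc_subset_Icc_left ha).trans Icc_subset_Ici_self
  have hz : ContinuousOn (fun t ↦ x t + Q t - θ t) (Icc a b) := ((hx.1.mono hsub).add hQ).sub hθ
  refine le_of_antitone_of_sub_le_integral hanti hab (hx'.1.mono hsub) hz hinit fun s hs ↦ ?_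
  have hs0 : 0 ≤ s := ha.trans hs.1
  have hb0 : 0 ≤ b := ha.trans hab
  have huIcc : uIcc s b ⊆ Icc a b := uIcc_subset_Icc hs (right_mem_Icc.2 hab)
  have hFx := hx.intervalIntegrable_drift hlip.continuous hs0 hb0
  have hFx' := hx'.intervalIntegrable_drift hlip.continuous hs0 hb0
  have hFz := ((hlip.continuous.comp_continuousOn hz).mono huIcc).intervalIntegrable (μ := volume)
  have hΔu := (intervalIntegrable_of_Ici hu' hs0 hb0).sub (intervalIntegrable_of_Ici hu hs0 hb0)
  have hKθ : IntervalIntegrable (fun r ↦ K * θ r) volume s b :=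
    (hθ.mono huIcc).intervalIntegrable.const_mul _
  have hdrift : ∫ r in s..b, (F (x' r) - F (x r) - K * θ r)
      ≤ ∫ r in s..b, (F (x' r) - F (x r + Q r - θ r)) := by
    refine intervalIntegral.integral_mono_on hs.2 ((hFx'.sub hFx).sub hKθ) (hFx'.sub hFz)
      fun r hr ↦ ?_
    have hr' := huIcc (Icc_subset_uIcc hr)
    linarith [apply_add_sub_le_of_antitone_of_lipschitzWith hanti hlip (y := x r)
      (hQ0 r hr') (hθ0 r hr')]
  have hincr' := hincr s hs
  have hΔ := hx.sub_sub_sub_eq_integral hx' hlip.continuous hu hu' hs0 hb0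
  rw [intervalIntegral.integral_add hΔu hKθ] at hincr'
  rw [intervalIntegral.integral_sub (hFx'.sub hFx) hKθ] at hdrift
  rw [intervalIntegral.integral_add (hFx'.sub hFx) hΔu] at hΔ
  linarith

end Trajectory

lemma integral_mul_exp_neg_mul_le_of_monotoneOn {P : ℝ → ℝ} {K s t : ℝ} (hK : 0 ≤ K) (hs : 0 ≤ s)
    (hst : s ≤ t) (hP : MonotoneOn P (Icc s t)) (hPc : ContinuousOn P (Icc s t)) :
    ∫ r in s..t, K * (Real.exp (-K * r) * P r)
      ≤ (1 - Real.exp (-K * t)) * P t - (1 - Real.exp (-K * s)) * P s := by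
  have hexp : ∫ r in s..t, K * Real.exp (-K * r) = Real.exp (-K * s) - Real.exp (-K * t) := by
    rw [intervalIntegral.integral_const_mul, ← neg_sub, ← mul_integral_exp_const_mul (-K) s t,
      neg_mul, neg_neg]
  have hle : ∫ r in s..t, K * (Real.exp (-K * r) * P r)
      ≤ (Real.exp (-K * s) - Real.exp (-K * t)) * P t := by
    rw [← hexp, ← intervalIntegral.integral_mul_const]
    refine intervalIntegral.integral_mono_on hst ?_ ?_ fun r hr ↦ ?_
    · refine ContinuousOn.intervalIntegrable ?_
      rw [uIcc_of_le hst]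
      fun_prop
    · exact (by fun_prop : Continuous fun r ↦ K * Real.exp (-K * r) * P t).intervalIntegrable _ _
    · rw [mul_assoc]
      gcongr
      exact hP hr (right_mem_Icc.2 hst) hr.2
  have hnonneg : 0 ≤ (1 - Real.exp (-K * s)) * (P t - P s) :=
    mul_nonneg (sub_nonneg.2 (Real.exp_le_one_iff.2 (by nlinarith)))
      (sub_nonneg.2 (hP (left_mem_Icc.2 hst) (right_mem_Icc.2 hst) hst))
  linarith

lemma continuous_intervalIntegral_of_integrable {f : ℝ → ℝ} (hf : Integrable f) (a : ℝ) :
    Continuous fun t ↦ ∫ r in a..t, f r :=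
  intervalIntegral.continuous_primitive (fun _ _ ↦ hf.intervalIntegrable) a

/- With `θ t = exp (-K * t) * ∫ p - ∫ κ`, the mass removed by `p` that has neither decayed at rate
`K` nor been returned by `κ`, this says `q - p + κ + K * θ ≤ (∫ q - θ)'`. -/
lemma integral_add_mul_unreturned_le {q p κ : ℝ → ℝ} {K s t : ℝ} (hK : 0 ≤ K) (hs : 0 ≤ s)
    (hst : s ≤ t) (hq : Integrable q) (hp : Integrable p) (hκ : Integrable κ)
    (hp0 : 0 ≤ p) (hκ0 : 0 ≤ κ) :
    ∫ r in s..t, (q r - p r + κ r +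
        K * (Real.exp (-K * r) * (∫ v in 0..r, p v) - ∫ v in 0..r, κ v))
      ≤ ((∫ r in 0..t, q r) - (Real.exp (-K * t) * (∫ r in 0..t, p r) - ∫ r in 0..t, κ r)) -
        ((∫ r in 0..s, q r) - (Real.exp (-K * s) * (∫ r in 0..s, p r) - ∫ r in 0..s, κ r)) := by
  have hP := continuous_intervalIntegral_of_integrable hp 0
  have hR := continuous_intervalIntegral_of_integrable hκ 0
  have hweight := integral_mul_exp_neg_mul_le_of_monotoneOn hK hs hst
    ((monotone_intervalIntegral_of_nonneg (fun _ _ ↦ hp.intervalIntegrable) hp0 0).monotoneOn _)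
    hP.continuousOn
  have hR0 : 0 ≤ ∫ r in s..t, K * ∫ v in 0..r, κ v :=
    intervalIntegral.integral_nonneg hst fun r hr ↦
      mul_nonneg hK (intervalIntegral.integral_nonneg (hs.trans hr.1) fun v _ ↦ hκ0 v)
  have hΔ {f : ℝ → ℝ} (hf : Integrable f) :
      ∫ r in s..t, f r = (∫ r in 0..t, f r) - ∫ r in 0..s, f r :=
    (intervalIntegral.integral_interval_sub_left hf.intervalIntegrable hf.intervalIntegrable).symm
  have hPi : IntervalIntegrable (fun r ↦ K * (Real.exp (-K * r) * ∫ v in 0..r, p v)) volume s t :=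
    Continuous.intervalIntegrable (by fun_prop) _ _
  have hRi : IntervalIntegrable (fun r ↦ K * ∫ v in 0..r, κ v) volume s t :=
    (hR.const_mul K).intervalIntegrable _ _
  have hqp : IntervalIntegrable (fun r ↦ q r - p r) volume s t :=
    hq.intervalIntegrable.sub hp.intervalIntegrable
  simp only [mul_sub]
  rw [intervalIntegral.integral_add (hqp.add hκ.intervalIntegrable) (hPi.sub hRi),
    intervalIntegral.integral_sub hPi hRi, intervalIntegral.integral_add hqp hκ.intervalIntegrable,
    intervalIntegral.integral_sub hq.intervalIntegrable hp.intervalIntegrable, hΔ hq, hΔ hp, hΔ hκ]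
  linarith

namespace Trajectory

variable {F u u' x x' : ℝ → ℝ} {x₀ : ℝ} {K : NNReal}

lemma le_add_integral_of_compensation {q p κ : ℝ → ℝ} {A : ℝ} (hx : Trajectory F x₀ u x)
    (hx' : Trajectory F x₀ u' x') (hanti : Antitone F) (hlip : LipschitzWith K F)
    (hu : LocallyIntegrableOn u (Ici 0)) (hu' : LocallyIntegrableOn u' (Ici 0))
    (hq : Integrable q) (hp : Integrable p) (hκ : Integrable κ)
    (hq0 : 0 ≤ q) (hp0 : 0 ≤ p) (hκ0 : 0 ≤ κ) (heq : u' = u + q - p + κ) (hA : 0 ≤ A)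
    (hcomp : ∀ t ∈ Icc 0 A, ∫ r in 0..t, κ r ≤ Real.exp (-K * t) * ∫ r in 0..t, p r) :
    x' A ≤ x A + ∫ r in 0..A, q r := by
  have hQ := continuous_intervalIntegral_of_integrable hq 0
  have hP := continuous_intervalIntegral_of_integrable hp 0
  have hR := continuous_intervalIntegral_of_integrable hκ 0
  refine (hx.le_add_sub hx' hanti hlip hu hu' le_rfl hA hQ.continuousOn
    (by fun_prop : Continuous fun t ↦
      Real.exp (-K * t) * (∫ r in 0..t, p r) - ∫ r in 0..t, κ r).continuousOn
    (fun t ht ↦ intervalIntegral.integral_nonneg ht.1 fun r _ ↦ hq0 r)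
    (fun t ht ↦ sub_nonneg.2 (hcomp t ht)) (fun s hs ↦ ?_) ?_).trans
    (sub_le_self _ (sub_nonneg.2 (hcomp A (right_mem_Icc.2 hA))))
  · refine (intervalIntegral.integral_congr fun r _ ↦ ?_).trans_le
      (integral_add_mul_unreturned_le K.2 hs.1 hs.2 hq hp hκ hp0 hκ0)
    simp only [heq, Pi.add_apply, Pi.sub_apply]
    ring
  · simp [hx.apply_zero, hx'.apply_zero]

lemma le_add_of_control_eq {s t M : ℝ} (hx : Trajectory F x₀ u x)
    (hx' : Trajectory F x₀ u' x') (hanti : Antitone F) (hlip : LipschitzWith K F)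
    (hu : LocallyIntegrableOn u (Ici 0)) (hu' : LocallyIntegrableOn u' (Ici 0)) (hM : 0 ≤ M)
    (hs : 0 ≤ s) (hst : s ≤ t) (heq : ∀ r > s, u' r = u r) (hle : x' s ≤ x s + M) :
    x' t ≤ x t + M := by
  have h := hx.le_add_sub (Q := fun _ ↦ M) (θ := 0) hx' hanti hlip hu hu' hs hst
    continuousOn_const continuousOn_const (fun _ _ ↦ hM) (fun _ _ ↦ le_rfl) (fun r hr ↦ ?_)
    (by simpa using hle)
  · simpa using h
  · rw [intervalIntegral.integral_congr_ae (g := 0)]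
    · simp
    · refine .of_forall fun v hv ↦ ?_
      simp [heq v (hr.1.trans_lt (uIoc_of_le hr.2 ▸ hv).1)]

end Trajectory

section LocalizedControl

variable {η N T β : ℝ} {u : ℝ → ℝ}

/-- The control that has to be added to `u` on `[0, T]` to raise it to the level `η`. -/
noncomputable def shortfall (η T : ℝ) (u : ℝ → ℝ) : ℝ → ℝ :=
  (Icc 0 T).indicator fun t ↦ max (η - u t) 0

/-- The control that has to be removed from `u` on `[0, T]` to lower it to the level `N`. -/
noncomputable def excess (N T : ℝ) (u : ℝ → ℝ) : ℝ → ℝ :=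
  (Icc 0 T).indicator fun t ↦ max (u t - N) 0

/-- The control spent on `(T, T + β]` in exchange for the one removed on `[0, T]`: its constant
rate, rather than its mass, is the total excess. -/
noncomputable def compensation (N T β : ℝ) (u : ℝ → ℝ) : ℝ → ℝ :=
  (Ioc T (T + β)).indicator fun _ ↦ ∫ t, excess N T u t

/-- The control `u` truncated to `[η, N]` on `[0, T]` and compensated on `(T, T + β]` for what the
truncation from above has removed. -/
noncomputable def localizedControl (η N T β : ℝ) (u : ℝ → ℝ) : ℝ → ℝ :=
  u + shortfall η T u - excess N T u + compensation N T β u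

lemma shortfall_nonneg : 0 ≤ shortfall η T u :=
  indicator_nonneg fun _ _ ↦ le_max_right _ _

lemma excess_nonneg : 0 ≤ excess N T u :=
  indicator_nonneg fun _ _ ↦ le_max_right _ _

lemma compensation_nonneg : 0 ≤ compensation N T β u :=
  indicator_nonneg fun _ _ ↦ integral_nonneg excess_nonneg

lemma integrable_shortfall (hu : LocallyIntegrableOn u (Ici 0)) : Integrable (shortfall η T u) :=
  (integrable_indicator_iff measurableSet_Icc).2 <|
    ((integrableOn_const (by simp)).sub
      (hu.integrableOn_compact_subset Icc_subset_Ici_self isCompact_Icc)).pos_part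

lemma integrable_excess (hu : LocallyIntegrableOn u (Ici 0)) : Integrable (excess N T u) :=
  (integrable_indicator_iff measurableSet_Icc).2 <|
    ((hu.integrableOn_compact_subset Icc_subset_Ici_self isCompact_Icc).sub
      (integrableOn_const (by simp))).pos_part

lemma integrable_compensation : Integrable (compensation N T β u) :=
  (integrable_indicator_iff measurableSet_Ioc).2 (integrableOn_const (by simp))

lemma integral_compensation (hβ : 0 ≤ β) :
    ∫ t, compensation N T β u t = β * ∫ t, excess N T u t := by
  rw [compensation, integral_indicator_const _ measurableSet_Ioc, Real.volume_real_Ioc_of_le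
    (by linarith), add_sub_cancel_left, smul_eq_mul]

lemma integral_shortfall_le (hη : 0 ≤ η) (hT : 0 ≤ T) (hu : LocallyIntegrableOn u (Ici 0))
    (hu0 : ∀ᵐ t ∂volume.restrict (Ici 0), 0 ≤ u t) : ∫ t, shortfall η T u t ≤ η * T := calc
  ∫ t, shortfall η T u t = ∫ t in Icc 0 T, max (η - u t) 0 := integral_indicator measurableSet_Icc
  _ ≤ ∫ _ in Icc 0 T, η := by
    refine integral_mono_ae ((integrable_indicator_iff measurableSet_Icc).1
      (integrable_shortfall hu)) (integrableOn_const (by simp)) ?_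
    filter_upwards [ae_restrict_of_ae_restrict_of_subset Icc_subset_Ici_self hu0] with t ht
    exact max_le (sub_le_self _ ht) hη
  _ = η * T := by simp [hT, mul_comm]

lemma integral_excess_le (hN : 0 ≤ N) (hu : LocallyIntegrableOn u (Ici 0))
    (hu0 : ∀ᵐ t ∂volume.restrict (Ici 0), 0 ≤ u t) :
    ∫ t, excess N T u t ≤ ∫ t in Icc 0 T, u t := calc
  ∫ t, excess N T u t = ∫ t in Icc 0 T, max (u t - N) 0 := integral_indicator measurableSet_Icc
  _ ≤ ∫ t in Icc 0 T, u t := by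
    refine integral_mono_ae ((integrable_indicator_iff measurableSet_Icc).1
      (integrable_excess hu)) (hu.integrableOn_compact_subset Icc_subset_Ici_self isCompact_Icc) ?_
    filter_upwards [ae_restrict_of_ae_restrict_of_subset Icc_subset_Ici_self hu0] with t ht
    exact max_le (sub_le_self _ hN) ht

lemma localizedControl_of_mem_Icc (hηN : η ≤ N) {t : ℝ} (ht : t ∈ Icc 0 T) :
    localizedControl η N T β u t = max (min (u t) N) η := by
  have ht' : t ∉ Ioc T (T + β) := fun h ↦ h.1.not_ge ht.2
  simp only [localizedControl, shortfall, excess, compensation, Pi.add_apply, Pi.sub_apply,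
    indicator_of_mem ht, indicator_of_notMem ht']
  grind

lemma localizedControl_of_mem_Ioc {t : ℝ} (ht : t ∈ Ioc T (T + β)) :
    localizedControl η N T β u t = u t + ∫ s, excess N T u s := by
  have ht' : t ∉ Icc 0 T := fun h ↦ ht.1.not_ge h.2
  simp [localizedControl, shortfall, excess, compensation, ht, ht']

lemma localizedControl_of_gt (hβ : 0 ≤ β) {t : ℝ} (ht : T + β < t) :
    localizedControl η N T β u t = u t := by
  have htT : t ∉ Icc 0 T := fun h ↦ ht.not_ge (h.2.trans (by linarith))
  have htβ : t ∉ Ioc T (T + β) := fun h ↦ ht.not_ge h.2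
  simp [localizedControl, shortfall, excess, compensation, htT, htβ]

lemma locallyIntegrableOn_localizedControl (hu : LocallyIntegrableOn u (Ici 0)) :
    LocallyIntegrableOn (localizedControl η N T β u) (Ici 0) :=
  ((hu.add ((integrable_shortfall hu).locallyIntegrable.locallyIntegrableOn _)).sub
    ((integrable_excess hu).locallyIntegrable.locallyIntegrableOn _)).add
    (integrable_compensation.locallyIntegrable.locallyIntegrableOn _)

lemma Admissible.localizedControl (hu : Admissible u) (hη : 0 < η) (hηN : η ≤ N) (hβ : 0 ≤ β) :
    Admissible (localizedControl η N T β u) := by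
  have hu' := hu.1
  refine ⟨?_, fun S _ ↦ ?_, ?_⟩
  · exact ((hu'.add (((measurable_const.sub hu').max measurable_const).indicator
      measurableSet_Icc)).sub (((hu'.sub measurable_const).max measurable_const).indicator
      measurableSet_Icc)).add (measurable_const.indicator measurableSet_Ioc)
  · exact (locallyIntegrableOn_localizedControl hu.locallyIntegrableOn).integrableOn_compact_subset
      Icc_subset_Ici_self isCompact_Icc
  · filter_upwards [hu.2.2, ae_restrict_mem measurableSet_Ici] with t ht ht0
    rcases le_or_gt t T with htT | htT
    · rw [localizedControl_of_mem_Icc hηN ⟨ht0, htT⟩]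
      exact hη.trans_le (le_max_right _ _)
    rcases le_or_gt t (T + β) with htβ | htβ
    · rw [localizedControl_of_mem_Ioc ⟨htT, htβ⟩]
      exact add_pos_of_pos_of_nonneg ht (integral_nonneg excess_nonneg)
    · rwa [localizedControl_of_gt hβ htβ]

lemma intervalIntegral_compensation_le {K : NNReal} (hβ : β = Real.exp (-K * (T + β))) {t : ℝ}
    (ht : t ∈ Icc 0 (T + β)) :
    ∫ r in 0..t, compensation N T β u r ≤ Real.exp (-K * t) * ∫ r in 0..t, excess N T u r := by
  have hβ0 : 0 ≤ β := hβ ▸ (Real.exp_pos _).le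
  rcases le_or_gt t T with htT | htT
  · have hzero : ∫ r in 0..t, compensation N T β u r = 0 :=
      intervalIntegral.integral_zero_ae <| .of_forall fun r hr ↦
        indicator_of_notMem (fun h ↦ h.1.not_ge ((uIoc_of_le ht.1 ▸ hr).2.trans htT)) _
    rw [hzero]
    exact mul_nonneg (Real.exp_pos _).le
      (intervalIntegral.integral_nonneg ht.1 fun r _ ↦ excess_nonneg r)
  · have hexcess : ∫ r in 0..t, excess N T u r = ∫ r, excess N T u r := by
      rw [intervalIntegral.integral_of_le ht.1, ← integral_Icc_eq_integral_Ioc]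
      exact setIntegral_eq_integral_of_forall_compl_eq_zero fun r hr ↦
        indicator_of_notMem (fun h ↦ hr ⟨h.1, h.2.trans htT.le⟩) _
    calc ∫ r in 0..t, compensation N T β u r ≤ ∫ r, compensation N T β u r := by
          rw [intervalIntegral.integral_of_le ht.1]
          exact setIntegral_le_integral integrable_compensation (.of_forall compensation_nonneg)
      _ = β * ∫ r, excess N T u r := integral_compensation hβ0
      _ ≤ Real.exp (-K * t) * ∫ r, excess N T u r := by
          refine mul_le_mul_of_nonneg_right (hβ.trans_le (Real.exp_le_exp.2 ?_))
            (integral_nonneg excess_nonneg)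
          exact mul_le_mul_of_nonpos_left ht.2 (neg_nonpos.2 K.2)
      _ = Real.exp (-K * t) * ∫ r in 0..t, excess N T u r := by rw [hexcess]

lemma Trajectory.le_add_integral_shortfall {F x x' : ℝ → ℝ} {x₀ t : ℝ} {K : NNReal}
    (hx : Trajectory F x₀ u x) (hx' : Trajectory F x₀ (localizedControl η N T β u) x')
    (hanti : Antitone F) (hlip : LipschitzWith K F) (hu : LocallyIntegrableOn u (Ici 0))
    (hT : 0 ≤ T) (hβ : β = Real.exp (-K * (T + β))) (ht : 0 ≤ t) :
    x' t ≤ x t + ∫ r, shortfall η T u r := by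
  have hβ0 : 0 ≤ β := hβ ▸ (Real.exp_pos _).le
  have hu' : LocallyIntegrableOn (localizedControl η N T β u) (Ici 0) :=
    locallyIntegrableOn_localizedControl hu
  have hle {S : ℝ} (hS : S ∈ Icc 0 (T + β)) : x' S ≤ x S + ∫ r, shortfall η T u r := by
    refine (hx.le_add_integral_of_compensation hx' hanti hlip hu hu' (integrable_shortfall hu)
      (integrable_excess hu) integrable_compensation shortfall_nonneg excess_nonneg
      compensation_nonneg rfl hS.1 fun r hr ↦
        intervalIntegral_compensation_le hβ ⟨hr.1, hr.2.trans hS.2⟩).trans ?_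
    rw [intervalIntegral.integral_of_le hS.1]
    exact add_le_add_right
      (setIntegral_le_integral (integrable_shortfall hu) (.of_forall shortfall_nonneg)) _
  rcases le_total t (T + β) with htβ | htβ
  · exact hle ⟨ht, htβ⟩
  · exact hx.le_add_of_control_eq hx' hanti hlip hu hu' (integral_nonneg shortfall_nonneg)
      (by positivity) htβ (fun r hr ↦ localizedControl_of_gt hβ0 hr)
      (hle (right_mem_Icc.2 (by positivity)))

end LocalizedControl

section LogarithmicGain

lemma one_sub_div_le_log_sub_log {v w : ℝ} (hv : 0 < v) (hw : 0 < w) :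
    1 - v / w ≤ Real.log w - Real.log v := by
  have hlog := Real.log_le_sub_one_of_pos (div_pos hv hw)
  rw [Real.log_div hv.ne' hw.ne'] at hlog
  linarith

lemma div_sub_div_le_log_sub_log {v η N : ℝ} (hv : 0 < v) (hη : 0 < η) (hηN : η ≤ N) :
    max (η - v) 0 / η - max (v - N) 0 / N ≤ Real.log (max (min v N) η) - Real.log v := by
  have hN : 0 < N := hη.trans_le hηN
  rcases le_total v η with hvη | hvη
  · rw [max_eq_left (by linarith), max_eq_right (by linarith : v - N ≤ 0),
      min_eq_left (hvη.trans hηN), max_eq_right hvη, zero_div, sub_zero, sub_div, div_self hη.ne']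
    exact one_sub_div_le_log_sub_log hv hη
  rw [max_eq_right (by linarith : η - v ≤ 0), zero_div, zero_sub]
  rcases le_total v N with hvN | hvN
  · rw [max_eq_right (by linarith), min_eq_left hvN, max_eq_left hvη, zero_div, neg_zero, sub_self]
  · rw [max_eq_left (by linarith), min_eq_right hvN, max_eq_left hηN, sub_div, div_self hN.ne',
      neg_sub]
    exact one_sub_div_le_log_sub_log hv hN

lemma abs_log_max_min_le (v η N : ℝ) :
    |Real.log (max (min v N) η)| ≤ |Real.log v| + |Real.log η| + |Real.log N| := by
  have hv := abs_nonneg (Real.log v)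
  have hη := abs_nonneg (Real.log η)
  have hN := abs_nonneg (Real.log N)
  rcases max_choice (min v N) η with h | h
  · rcases min_choice v N with h' | h' <;> rw [h, h'] <;> linarith
  · rw [h]; linarith

/- The lower bound is affine in `v`, being the tangent of `1 / (v + D)` where `v + D = z`. -/
lemma mul_sub_le_log_add_sub_log {v D z : ℝ} (hv : 0 < v) (hD : 0 ≤ D) (hz : 0 < z) :
    D * (2 / z - (v + D) / z ^ 2) ≤ Real.log (v + D) - Real.log v := by
  have hvD : 0 < v + D := by positivity
  have htangent : 2 / z - (v + D) / z ^ 2 ≤ 1 / (v + D) := by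
    have : 1 / (v + D) - (2 / z - (v + D) / z ^ 2) = (v + D - z) ^ 2 / ((v + D) * z ^ 2) := by
      field_simp
      ring
    linarith [show 0 ≤ (v + D - z) ^ 2 / ((v + D) * z ^ 2) by positivity]
  calc D * (2 / z - (v + D) / z ^ 2) ≤ D * (1 / (v + D)) := by gcongr
    _ = 1 - v / (v + D) := by field_simp; ring
    _ ≤ Real.log (v + D) - Real.log v := one_sub_div_le_log_sub_log hv hvD

lemma abs_log_add_le {v D : ℝ} (hv : 0 < v) (hD : 0 ≤ D) :
    |Real.log (v + D)| ≤ |Real.log v| + v + D := by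
  have hle := Real.log_le_sub_one_of_pos (by positivity : 0 < v + D)
  have hmono := Real.log_le_log hv (by linarith : v ≤ v + D)
  exact abs_le.2 ⟨by linarith [neg_abs_le (Real.log v)], by linarith [abs_nonneg (Real.log v)]⟩

variable {η N T β ρ K₁ : ℝ} {u : ℝ → ℝ}

lemma abs_log_localizedControl_le (hηN : η ≤ N) (hβ : 0 ≤ β) {t : ℝ} (ht : 0 ≤ t)
    (hut : 0 < u t) :
    |Real.log (localizedControl η N T β u t)|
      ≤ |Real.log (u t)| + u t + (|Real.log η| + |Real.log N| + ∫ s, excess N T u s) := by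
  have hD : 0 ≤ ∫ s, excess N T u s := integral_nonneg excess_nonneg
  have hη := abs_nonneg (Real.log η)
  have hN := abs_nonneg (Real.log N)
  rcases le_or_gt t T with htT | htT
  · rw [localizedControl_of_mem_Icc hηN ⟨ht, htT⟩]
    linarith [abs_log_max_min_le (u t) η N]
  rcases le_or_gt t (T + β) with htβ | htβ
  · rw [localizedControl_of_mem_Ioc ⟨htT, htβ⟩]
    linarith [abs_log_add_le hut hD]
  · rw [localizedControl_of_gt hβ htβ]
    linarith

lemma integrableOn_exp_mul_log_localizedControl (hu : Admissible u) (hη : 0 < η) (hηN : η ≤ N)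
    (hβ : 0 ≤ β) (hρ : 0 < ρ)
    (hexpu : IntegrableOn (fun t ↦ Real.exp (-ρ * t) * u t) (Ioi 0))
    (hlog : IntegrableOn (fun t ↦ Real.exp (-ρ * t) * Real.log (u t)) (Ioi 0)) :
    IntegrableOn (fun t ↦ Real.exp (-ρ * t) * Real.log (localizedControl η N T β u t)) (Ioi 0) := by
  have hexp : IntegrableOn (fun t ↦ Real.exp (-ρ * t)) (Ioi 0) :=
    integrableOn_exp_mul_Ioi (neg_lt_zero.2 hρ) 0
  have hmeas := (hu.localizedControl hη hηN hβ (T := T)).1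
  refine Integrable.mono' ((hlog.abs.add hexpu).add
    (hexp.mul_const (|Real.log η| + |Real.log N| + ∫ s, excess N T u s)))
    (by fun_prop) ?_
  filter_upwards [ae_restrict_of_ae_restrict_of_subset Ioi_subset_Ici_self hu.2.2,
    ae_restrict_mem measurableSet_Ioi] with t hut ht
  simp only [Real.norm_eq_abs, abs_mul, Real.abs_exp, Pi.add_apply, ← mul_add]
  gcongr
  exact abs_log_localizedControl_le hηN hβ (mem_Ioi.1 ht).le hut

lemma setIntegral_Icc_le_exp_mul {A : ℝ} (hρ : 0 ≤ ρ) (hu : LocallyIntegrableOn u (Ici 0))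
    (hu0 : ∀ᵐ t ∂volume.restrict (Ici 0), 0 ≤ u t)
    (hexpu : IntegrableOn (fun t ↦ Real.exp (-ρ * t) * u t) (Ioi 0)) :
    ∫ t in Icc 0 A, u t ≤ Real.exp (ρ * A) * ∫ t in Ioi 0, Real.exp (-ρ * t) * u t := by
  rw [← integral_Ici_eq_integral_Ioi, ← integral_const_mul]
  have hint : IntegrableOn (fun t ↦ Real.exp (ρ * A) * (Real.exp (-ρ * t) * u t)) (Ici 0) :=
    ((integrableOn_Ici_iff_integrableOn_Ioi (by finiteness)).2 hexpu).const_mul _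
  calc ∫ t in Icc 0 A, u t
      ≤ ∫ t in Icc 0 A, Real.exp (ρ * A) * (Real.exp (-ρ * t) * u t) := by
        refine integral_mono_ae (hu.integrableOn_compact_subset Icc_subset_Ici_self isCompact_Icc)
          (hint.mono_set Icc_subset_Ici_self) ?_
        filter_upwards [ae_restrict_of_ae_restrict_of_subset Icc_subset_Ici_self hu0,
          ae_restrict_mem measurableSet_Icc] with t hut ht
        rw [← mul_assoc, ← Real.exp_add]
        refine le_mul_of_one_le_left hut (Real.one_le_exp ?_)
        nlinarith [ht.2]
    _ ≤ ∫ t in Ici 0, Real.exp (ρ * A) * (Real.exp (-ρ * t) * u t) := by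
        refine setIntegral_mono_set hint ?_ Icc_subset_Ici_self.eventuallyLE
        filter_upwards [hu0] with t hut
        exact mul_nonneg (Real.exp_pos _).le (mul_nonneg (Real.exp_pos _).le hut)

lemma setIntegral_Ioi_indicator {f : ℝ → ℝ} {s : Set ℝ} {a : ℝ} (hs : s ⊆ Ici a) :
    ∫ t in Ioi a, s.indicator f t = ∫ t, s.indicator f t := by
  rw [← integral_Ici_eq_integral_Ioi]
  exact setIntegral_eq_integral_of_forall_compl_eq_zero fun t ht ↦
    indicator_of_notMem (fun h ↦ ht (hs h)) f

lemma mul_div_le_setIntegral_mul_sub {D z : ℝ} (hT : 0 ≤ T) (hβ : 0 < β) (hβ1 : β ≤ 1) (hz : 0 < z)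
    (hu : LocallyIntegrableOn u (Ici 0)) (hD : 0 ≤ D) (hDu : D ≤ ∫ t in Icc 0 T, u t)
    (huz : ∫ t in Icc 0 (T + β), u t ≤ z * β) :
    D * β / z ≤ ∫ t in Ioc T (T + β), D * (2 / z - (u t + D) / z ^ 2) := by
  have hint {s : Set ℝ} (hs : s ⊆ Icc 0 (T + β)) : IntegrableOn u s :=
    (hu.integrableOn_compact_subset Icc_subset_Ici_self isCompact_Icc).mono_set hs
  have hT' : Icc 0 T ⊆ Icc 0 (T + β) := Icc_subset_Icc_right (by linarith)
  have hβ' : Ioc T (T + β) ⊆ Icc 0 (T + β) := fun t ht ↦ ⟨hT.trans ht.1.le, ht.2⟩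
  have hconst (r : ℝ) : IntegrableOn (fun _ ↦ r) (Ioc T (T + β)) := integrableOn_const (by simp)
  have hsplit : ∫ t in Icc 0 (T + β), u t
      = (∫ t in Icc 0 T, u t) + ∫ t in Ioc T (T + β), u t := by
    rw [← Icc_union_Ioc_eq_Icc hT (by linarith), setIntegral_union
      (disjoint_left.2 fun t h h' ↦ h'.1.not_ge h.2) measurableSet_Ioc (hint hT') (hint hβ')]
  have hmass : (∫ t in Ioc T (T + β), u t) + β * D ≤ z * β := by
    nlinarith [mul_le_mul_of_nonneg_right hβ1 hD]
  calc D * β / z = D * (β * (2 / z) - z * β / z ^ 2) := by field_simp; ring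
    _ ≤ D * (β * (2 / z) - ((∫ t in Ioc T (T + β), u t) + β * D) / z ^ 2) := by gcongr
    _ = ∫ t in Ioc T (T + β), D * (2 / z - (u t + D) / z ^ 2) := by
      have huD : IntegrableOn (fun t ↦ (u t + D) / z ^ 2) (Ioc T (T + β)) :=
        ((hint hβ').add (hconst D)).div_const _
      rw [integral_const_mul, integral_sub (hconst _) huD, integral_div _ fun t ↦ u t + D,
        integral_add (hint hβ') (hconst D)]
      simp [hβ.le]

/-- A lower bound, affine in `u`, for the discounted logarithmic gain that the compensation yields
on `(T, T + β]`: there the logarithm of `u` plus the total excess is bounded below by means of the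
tangent at the control level `z`. -/
noncomputable def compensationGain (ρ N T β z : ℝ) (u : ℝ → ℝ) : ℝ → ℝ :=
  (Ioc T (T + β)).indicator fun t ↦ Real.exp (-ρ * (T + β)) *
    ((∫ s, excess N T u s) * (2 / z - (u t + ∫ s, excess N T u s) / z ^ 2))

lemma integrable_compensationGain {z : ℝ} (hT : 0 ≤ T) (hu : LocallyIntegrableOn u (Ici 0)) :
    Integrable (compensationGain ρ N T β z u) := by
  have huint : IntegrableOn u (Ioc T (T + β)) :=
    (hu.integrableOn_compact_subset (fun t ht ↦ hT.trans ht.1) isCompact_Icc).mono_set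
      Ioc_subset_Icc_self
  have hconst (r : ℝ) : IntegrableOn (fun _ ↦ r) (Ioc T (T + β)) := integrableOn_const (by simp)
  exact (integrable_indicator_iff measurableSet_Ioc).2
    (((hconst _).sub ((huint.add (hconst _)).div_const _)).const_mul _ |>.const_mul _)

lemma integral_excess_div_le_integral_compensationGain {z : ℝ} (hT : 0 ≤ T) (hβ : 0 < β)
    (hβ1 : β ≤ 1) (hρ : 0 ≤ ρ) (hK₁ : 0 < K₁)
    (hN : N = K₁ * β⁻¹ ^ 2 * Real.exp (2 * ρ * (T + β)))
    (hz : z = Real.exp (ρ * (T + β)) * K₁ / β) (hu : LocallyIntegrableOn u (Ici 0))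
    (hu0 : ∀ᵐ t ∂volume.restrict (Ici 0), 0 ≤ u t)
    (hexpu : IntegrableOn (fun t ↦ Real.exp (-ρ * t) * u t) (Ioi 0))
    (huK : ∫ t in Ioi 0, Real.exp (-ρ * t) * u t ≤ K₁) :
    (∫ t, excess N T u t) / N ≤ ∫ t, compensationGain ρ N T β z u t := by
  set D := ∫ t, excess N T u t
  have hz0 : 0 < z := by rw [hz]; positivity
  have hDu : D ≤ ∫ t in Icc 0 T, u t := integral_excess_le (by rw [hN]; positivity) hu hu0
  have huz : ∫ t in Icc 0 (T + β), u t ≤ z * β := by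
    refine (setIntegral_Icc_le_exp_mul hρ hu hu0 hexpu).trans ?_
    rw [hz, div_mul_cancel₀ _ hβ.ne']
    gcongr
  calc D / N = Real.exp (-ρ * (T + β)) * (D * β / z) := by
        rw [hN, hz, mul_assoc 2, two_mul, Real.exp_add, neg_mul, Real.exp_neg]
        field_simp
    _ ≤ Real.exp (-ρ * (T + β)) * ∫ t in Ioc T (T + β), D * (2 / z - (u t + D) / z ^ 2) := by
        gcongr
        exact mul_div_le_setIntegral_mul_sub hT hβ hβ1 hz0 hu (integral_nonneg excess_nonneg)
          hDu huz
    _ = ∫ t, compensationGain ρ N T β z u t := by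
        rw [compensationGain, integral_indicator measurableSet_Ioc, integral_const_mul,
          integral_const_mul, integral_const_mul]

lemma le_exp_mul_log_localizedControl_sub {z t : ℝ} (hη : 0 < η) (hηN : η ≤ N) (hβ : 0 ≤ β)
    (hρ : 0 ≤ ρ) (hz : 0 < z) (ht : 0 ≤ t) (hut : 0 < u t) :
    Real.exp (-ρ * T) / η * shortfall η T u t - excess N T u t / N
        + compensationGain ρ N T β z u t
      ≤ Real.exp (-ρ * t) * Real.log (localizedControl η N T β u t)
        - Real.exp (-ρ * t) * Real.log (u t) := by
  rw [← mul_sub]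
  have hanti {a b : ℝ} (hab : a ≤ b) : Real.exp (-ρ * b) ≤ Real.exp (-ρ * a) :=
    Real.exp_le_exp.2 (by nlinarith)
  rcases le_or_gt t T with htT | htT
  · have hN : 0 < N := hη.trans_le hηN
    have hlog := div_sub_div_le_log_sub_log hut hη hηN
    have hexp1 : Real.exp (-ρ * t) ≤ 1 := Real.exp_le_one_iff.2 (by nlinarith)
    have hmem : t ∈ Icc 0 T := ⟨ht, htT⟩
    rw [localizedControl_of_mem_Icc hηN hmem, compensationGain,
      indicator_of_notMem (fun h ↦ h.1.not_ge htT),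
      add_zero, show shortfall η T u t = max (η - u t) 0 from indicator_of_mem hmem _,
      show excess N T u t = max (u t - N) 0 from indicator_of_mem hmem _]
    calc Real.exp (-ρ * T) / η * max (η - u t) 0 - max (u t - N) 0 / N
        = Real.exp (-ρ * T) * (max (η - u t) 0 / η) - 1 * (max (u t - N) 0 / N) := by ring
      _ ≤ Real.exp (-ρ * t) * (max (η - u t) 0 / η)
          - Real.exp (-ρ * t) * (max (u t - N) 0 / N) :=
        sub_le_sub (mul_le_mul_of_nonneg_right (hanti htT) (by positivity))
          (mul_le_mul_of_nonneg_right hexp1 (by positivity))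
      _ ≤ _ := by rw [← mul_sub]; gcongr
  have hmem : t ∉ Icc 0 T := fun h ↦ htT.not_ge h.2
  rw [show shortfall η T u t = 0 from indicator_of_notMem hmem _,
    show excess N T u t = 0 from indicator_of_notMem hmem _, mul_zero, zero_div, sub_zero, zero_add,
    compensationGain]
  rcases le_or_gt t (T + β) with htβ | htβ
  · have hD : 0 ≤ ∫ s, excess N T u s := integral_nonneg excess_nonneg
    rw [localizedControl_of_mem_Ioc ⟨htT, htβ⟩,
      indicator_of_mem (show t ∈ Ioc T (T + β) from ⟨htT, htβ⟩)]
    refine (mul_le_mul_of_nonneg_left (mul_sub_le_log_add_sub_log hut hD hz)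
      (Real.exp_pos _).le).trans (mul_le_mul_of_nonneg_right (hanti htβ) ?_)
    exact sub_nonneg.2 (Real.log_le_log hut (by linarith))
  · rw [localizedControl_of_gt hβ htβ, indicator_of_notMem (fun h ↦ htβ.not_ge h.2), sub_self,
      mul_zero]

lemma exp_div_mul_integral_shortfall_le (hu : Admissible u) (hη : 0 < η) (hηN : η ≤ N)
    (hT : 0 ≤ T) (hβ : 0 < β) (hβ1 : β ≤ 1) (hρ : 0 < ρ) (hK₁ : 0 < K₁)
    (hN : N = K₁ * β⁻¹ ^ 2 * Real.exp (2 * ρ * (T + β)))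
    (hexpu : IntegrableOn (fun t ↦ Real.exp (-ρ * t) * u t) (Ioi 0))
    (huK : ∫ t in Ioi 0, Real.exp (-ρ * t) * u t ≤ K₁)
    (hlog : IntegrableOn (fun t ↦ Real.exp (-ρ * t) * Real.log (u t)) (Ioi 0)) :
    Real.exp (-ρ * T) / η * ∫ t, shortfall η T u t
      ≤ (∫ t in Ioi 0, Real.exp (-ρ * t) * Real.log (localizedControl η N T β u t))
        - ∫ t in Ioi 0, Real.exp (-ρ * t) * Real.log (u t) := by
  obtain ⟨z, hz⟩ : ∃ z, z = Real.exp (ρ * (T + β)) * K₁ / β := ⟨_, rfl⟩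
  have hz0 : 0 < z := by rw [hz]; positivity
  have huloc := hu.locallyIntegrableOn
  have hshort := (integrable_shortfall (η := η) (T := T) huloc).const_mul (Real.exp (-ρ * T) / η)
  have hexcess := (integrable_excess (N := N) (T := T) huloc).div_const N
  have hgain : Integrable (compensationGain ρ N T β z u) := integrable_compensationGain hT huloc
  have hlog' := integrableOn_exp_mul_log_localizedControl hu hη hηN hβ.le hρ hexpu hlog (T := T)
  have hnet : Integrable (fun t ↦ Real.exp (-ρ * T) / η * shortfall η T u t - excess N T u t / N) :=
    hshort.sub hexcess
  calc Real.exp (-ρ * T) / η * ∫ t, shortfall η T u t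
      ≤ Real.exp (-ρ * T) / η * (∫ t, shortfall η T u t) - (∫ t, excess N T u t) / N
          + ∫ t, compensationGain ρ N T β z u t := by
        linarith [integral_excess_div_le_integral_compensationGain hT hβ hβ1 hρ.le hK₁ hN hz huloc
          (hu.2.2.mono fun _ ↦ le_of_lt) hexpu huK]
    _ = ∫ t in Ioi 0, (Real.exp (-ρ * T) / η * shortfall η T u t - excess N T u t / N
          + compensationGain ρ N T β z u t) := by
        rw [integral_add hnet.integrableOn hgain.integrableOn,
          integral_sub hshort.integrableOn hexcess.integrableOn, integral_const_mul, integral_div]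
        simp only [shortfall, excess, compensationGain,
          setIntegral_Ioi_indicator Icc_subset_Ici_self,
          setIntegral_Ioi_indicator fun t (ht : t ∈ Ioc T (T + β)) ↦ hT.trans ht.1.le]
    _ ≤ ∫ t in Ioi 0, (Real.exp (-ρ * t) * Real.log (localizedControl η N T β u t)
          - Real.exp (-ρ * t) * Real.log (u t)) := by
        refine integral_mono_ae (hnet.add hgain).integrableOn (hlog'.sub hlog) ?_
        filter_upwards [ae_restrict_of_ae_restrict_of_subset Ioi_subset_Ici_self hu.2.2,
          ae_restrict_mem measurableSet_Ioi] with t hut ht using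
            le_exp_mul_log_localizedControl_sub hη hηN hβ.le hρ.le hz0 (mem_Ioi.1 ht).le hut
    _ = _ := integral_sub hlog' hlog

end LogarithmicGain

section Objective

variable {ρ c M : ℝ} {u x y : ℝ → ℝ}

lemma ObjIntegrable.integrableOn_exp_mul_sq (h : ObjIntegrable ρ c u x) (hc : 0 < c)
    (hx : ContinuousOn x (Ici 0)) (hu0 : ∀ᵐ t ∂volume.restrict (Ici 0), 0 < u t)
    (hexpu : IntegrableOn (fun t ↦ Real.exp (-ρ * t) * u t) (Ioi 0)) :
    IntegrableOn (fun t ↦ Real.exp (-ρ * t) * x t ^ 2) (Ioi 0) := by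
  have hmeas : AEStronglyMeasurable x (volume.restrict (Ioi 0)) :=
    (hx.mono Ioi_subset_Ici_self).aestronglyMeasurable measurableSet_Ioi
  refine Integrable.mono' ((hexpu.sub h).div_const c)
    ((by fun_prop : Continuous fun t ↦ Real.exp (-ρ * t)).aestronglyMeasurable.mul (hmeas.pow 2)) ?_
  filter_upwards [ae_restrict_of_ae_restrict_of_subset Ioi_subset_Ici_self hu0] with t ht
  rw [Real.norm_of_nonneg (by positivity), le_div_iff₀ hc, Pi.sub_apply, ← mul_sub, mul_assoc]
  gcongr
  linarith [Real.log_le_sub_one_of_pos ht]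

lemma ObjIntegrable.integrableOn_exp_mul_log (h : ObjIntegrable ρ c u x)
    (hx : IntegrableOn (fun t ↦ Real.exp (-ρ * t) * x t ^ 2) (Ioi 0)) :
    IntegrableOn (fun t ↦ Real.exp (-ρ * t) * Real.log (u t)) (Ioi 0) :=
  (h.add (hx.const_mul c)).congr <| by
    filter_upwards with t
    rw [Pi.add_apply]
    ring

lemma objIntegrable_of_integrableOn
    (hu : IntegrableOn (fun t ↦ Real.exp (-ρ * t) * Real.log (u t)) (Ioi 0))
    (hx : IntegrableOn (fun t ↦ Real.exp (-ρ * t) * x t ^ 2) (Ioi 0)) : ObjIntegrable ρ c u x :=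
  (hu.sub (hx.const_mul c)).congr <| by
    filter_upwards with t
    rw [Pi.sub_apply]
    ring

lemma objective_eq_sub
    (hu : IntegrableOn (fun t ↦ Real.exp (-ρ * t) * Real.log (u t)) (Ioi 0))
    (hx : IntegrableOn (fun t ↦ Real.exp (-ρ * t) * x t ^ 2) (Ioi 0)) :
    objective ρ c u x = (∫ t in Ioi 0, Real.exp (-ρ * t) * Real.log (u t))
      - c * ∫ t in Ioi 0, Real.exp (-ρ * t) * x t ^ 2 := by
  rw [← integral_const_mul, ← integral_sub hu (hx.const_mul c)]
  exact integral_congr_ae (by filter_upwards with t; ring)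

lemma exp_mul_sq_le_of_le_add (hy0 : ∀ t ∈ Ioi (0 : ℝ), 0 ≤ y t)
    (hyx : ∀ t ∈ Ioi (0 : ℝ), y t ≤ x t + M) {t : ℝ} (ht : t ∈ Ioi 0) :
    Real.exp (-ρ * t) * y t ^ 2 ≤ Real.exp (-ρ * t) * x t ^ 2
      + 2 * M * (Real.exp (-ρ * t) * x t) + Real.exp (-ρ * t) * M ^ 2 :=
  calc Real.exp (-ρ * t) * y t ^ 2 ≤ Real.exp (-ρ * t) * (x t + M) ^ 2 := by
        gcongr
        exacts [hy0 t ht, hyx t ht]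
    _ = _ := by ring

lemma integrableOn_exp_mul_sq_of_le_add (hρ : 0 < ρ) (hy : ContinuousOn y (Ici 0))
    (hy0 : ∀ t ∈ Ioi (0 : ℝ), 0 ≤ y t) (hyx : ∀ t ∈ Ioi (0 : ℝ), y t ≤ x t + M)
    (hx : IntegrableOn (fun t ↦ Real.exp (-ρ * t) * x t) (Ioi 0))
    (hx2 : IntegrableOn (fun t ↦ Real.exp (-ρ * t) * x t ^ 2) (Ioi 0)) :
    IntegrableOn (fun t ↦ Real.exp (-ρ * t) * y t ^ 2) (Ioi 0) := by
  have hmeas : AEStronglyMeasurable y (volume.restrict (Ioi 0)) :=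
    (hy.mono Ioi_subset_Ici_self).aestronglyMeasurable measurableSet_Ioi
  refine Integrable.mono' ((hx2.add (hx.const_mul (2 * M))).add
    ((integrableOn_exp_mul_Ioi (neg_lt_zero.2 hρ) 0).mul_const (M ^ 2)))
    ((by fun_prop : Continuous fun t ↦ Real.exp (-ρ * t)).aestronglyMeasurable.mul (hmeas.pow 2)) ?_
  filter_upwards [ae_restrict_mem measurableSet_Ioi] with t ht
  rw [Real.norm_of_nonneg (by positivity)]
  exact exp_mul_sq_le_of_le_add hy0 hyx ht

lemma integral_exp_mul_sq_le_of_le_add {K₂ : ℝ} (hρ : 0 < ρ) (hM : 0 ≤ M)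
    (hy0 : ∀ t ∈ Ioi (0 : ℝ), 0 ≤ y t) (hyx : ∀ t ∈ Ioi (0 : ℝ), y t ≤ x t + M)
    (hx : IntegrableOn (fun t ↦ Real.exp (-ρ * t) * x t) (Ioi 0))
    (hxK : ∫ t in Ioi 0, Real.exp (-ρ * t) * x t ≤ K₂)
    (hx2 : IntegrableOn (fun t ↦ Real.exp (-ρ * t) * x t ^ 2) (Ioi 0))
    (hy2 : IntegrableOn (fun t ↦ Real.exp (-ρ * t) * y t ^ 2) (Ioi 0)) :
    ∫ t in Ioi 0, Real.exp (-ρ * t) * y t ^ 2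
      ≤ (∫ t in Ioi 0, Real.exp (-ρ * t) * x t ^ 2) + 2 * M * K₂ + M ^ 2 / ρ := by
  have hexp := integrableOn_exp_mul_Ioi (neg_lt_zero.2 hρ) 0
  have hcross := hx.const_mul (2 * M)
  have hsum : IntegrableOn (fun t ↦ Real.exp (-ρ * t) * x t ^ 2
    + 2 * M * (Real.exp (-ρ * t) * x t)) (Ioi 0) := hx2.add hcross
  calc ∫ t in Ioi 0, Real.exp (-ρ * t) * y t ^ 2
      ≤ ∫ t in Ioi 0, (Real.exp (-ρ * t) * x t ^ 2 + 2 * M * (Real.exp (-ρ * t) * x t)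
          + Real.exp (-ρ * t) * M ^ 2) :=
        setIntegral_mono_on hy2 (hsum.add (hexp.mul_const _)) measurableSet_Ioi fun _ ↦
          exp_mul_sq_le_of_le_add hy0 hyx
    _ = (∫ t in Ioi 0, Real.exp (-ρ * t) * x t ^ 2)
          + 2 * M * (∫ t in Ioi 0, Real.exp (-ρ * t) * x t) + M ^ 2 / ρ := by
        rw [integral_add hsum (hexp.mul_const _), integral_add hx2 hcross, integral_const_mul,
          integral_mul_const, integral_exp_mul_Ioi (neg_lt_zero.2 hρ)]
        simp only [mul_zero, Real.exp_zero, neg_div_neg_eq, one_div_mul_eq_div]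
    _ ≤ _ := by gcongr

lemma objIntegrable_localizedControl_and_objective_le {η N T β K₁ K₂ : ℝ} {x' : ℝ → ℝ}
    (hu : Admissible u) (hη : 0 < η) (hηN : η ≤ N) (hT : 0 ≤ T) (hβ : 0 < β) (hβ1 : β ≤ 1)
    (hρ : 0 < ρ) (hc : 0 < c) (hK₁ : 0 < K₁)
    (hN : N = K₁ * β⁻¹ ^ 2 * Real.exp (2 * ρ * (T + β)))
    (hexpu : IntegrableOn (fun t ↦ Real.exp (-ρ * t) * u t) (Ioi 0))
    (huK : ∫ t in Ioi 0, Real.exp (-ρ * t) * u t ≤ K₁)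
    (hexpx : IntegrableOn (fun t ↦ Real.exp (-ρ * t) * x t) (Ioi 0))
    (hxK : ∫ t in Ioi 0, Real.exp (-ρ * t) * x t ≤ K₂) (hobj : ObjIntegrable ρ c u x)
    (hx : ContinuousOn x (Ici 0)) (hx' : ContinuousOn x' (Ici 0))
    (hx'0 : ∀ t ∈ Ioi (0 : ℝ), 0 ≤ x' t) (hM : M = ∫ r, shortfall η T u r)
    (hxx' : ∀ t ∈ Ioi (0 : ℝ), x' t ≤ x t + M)
    (hloss : c * (2 * M * K₂ + M ^ 2 / ρ) ≤ Real.exp (-ρ * T) / η * M) :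
    ObjIntegrable ρ c (localizedControl η N T β u) x' ∧
      objective ρ c u x ≤ objective ρ c (localizedControl η N T β u) x' := by
  have hx2 := hobj.integrableOn_exp_mul_sq hc hx hu.2.2 hexpu
  have hx'2 := integrableOn_exp_mul_sq_of_le_add hρ hx' hx'0 hxx' hexpx hx2
  have hlog := hobj.integrableOn_exp_mul_log hx2
  have hlog' := integrableOn_exp_mul_log_localizedControl hu hη hηN hβ.le hρ hexpu hlog (T := T)
  refine ⟨objIntegrable_of_integrableOn hlog' hx'2, ?_⟩
  have hM0 : 0 ≤ M := hM.symm ▸ integral_nonneg shortfall_nonneg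
  have hgain := exp_div_mul_integral_shortfall_le hu hη hηN hT hβ hβ1 hρ hK₁ hN hexpu huK hlog
  have hstate := mul_le_mul_of_nonneg_left
    (integral_exp_mul_sq_le_of_le_add hρ hM0 hx'0 hxx' hexpx hxK hx2 hx'2) hc.le
  rw [objective_eq_sub hlog hx2, objective_eq_sub hlog' hx'2]
  rw [← hM] at hgain
  linarith

end Objective

section Constants

variable {ρ c K₁ K₂ L T β M : ℝ}

lemma eq_exp_neg_of_log_add_mul_eq {b : ℝ} (hβ : 0 < β) (h : Real.log β + b * β = -T * b) :
    β = Real.exp (-b * (T + β)) := by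
  rw [show -b * (T + β) = Real.log β by linarith, Real.exp_log hβ]

lemma exp_neg_mul_lt_mul_exp (hρ : 0 ≤ ρ) (hL : 0 < L) (hK₁ : 1 ≤ K₁) (hT : 0 < T) (hβ : 0 < β)
    (hβ1 : β ≤ 1) : Real.exp (-L * T) < K₁ * β⁻¹ ^ 2 * Real.exp (2 * ρ * (T + β)) :=
  calc Real.exp (-L * T) < 1 := Real.exp_lt_one_iff.2 (by nlinarith)
    _ ≤ K₁ * β⁻¹ ^ 2 * Real.exp (2 * ρ * (T + β)) :=
      one_le_mul_of_one_le_of_one_le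
        (one_le_mul_of_one_le_of_one_le hK₁ (one_le_pow₀ ((one_le_inv₀ hβ).2 hβ1)))
        (Real.one_le_exp (by positivity))

lemma exp_mul_le_exp_add (hL : 0 ≤ L) (hT : 1 ≤ T) :
    Real.exp (-L * T) * T ≤ Real.exp (-L) + (T - 1) := by
  have hle : Real.exp (-L * T) ≤ Real.exp (-L) := Real.exp_le_exp.2 (by nlinarith)
  have hle1 : Real.exp (-L * T) ≤ 1 := Real.exp_le_one_iff.2 (by nlinarith)
  nlinarith

lemma exp_add_mul_le_exp_mul {a : ℝ} (ha : 0 ≤ a) (hT : 1 ≤ T) :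
    Real.exp a + a * (T - 1) ≤ Real.exp (a * T) := by
  have hexp := Real.add_one_le_exp (a * (T - 1))
  have hone := Real.one_le_exp ha
  calc Real.exp a + a * (T - 1) ≤ Real.exp a * (a * (T - 1) + 1) := by
        nlinarith [mul_nonneg ha (sub_nonneg.2 hT)]
    _ ≤ Real.exp a * Real.exp (a * (T - 1)) := by gcongr
    _ = Real.exp (a * T) := by rw [← Real.exp_add]; ring_nf

lemma mul_state_loss_le (hρ : 0 < ρ) (hc : 0 < c) (hL : ρ + 2 * c / ρ < L)
    (hLineq : 2 * c * K₂ ≤ Real.exp (L - ρ) - 2 * c / ρ * Real.exp (-L)) (hT : 1 ≤ T)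
    (hM0 : 0 ≤ M) (hM : M ≤ Real.exp (-L * T) * T) :
    c * (2 * M * K₂ + M ^ 2 / ρ) ≤ Real.exp (-ρ * T) / Real.exp (-L * T) * M := by
  have hcρ : 0 < c / ρ := div_pos hc hρ
  rw [mul_div_assoc] at hL hLineq
  have hT1 := mul_nonneg hcρ.le (sub_nonneg.2 hT)
  have hcoeff : 2 * c * K₂ + c / ρ * M ≤ Real.exp ((L - ρ) * T) :=
    calc 2 * c * K₂ + c / ρ * M
        ≤ (Real.exp (L - ρ) - 2 * (c / ρ) * Real.exp (-L))
            + c / ρ * (Real.exp (-L) + (T - 1)) := by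
          gcongr
          exact hM.trans (exp_mul_le_exp_add (by linarith) hT)
      _ ≤ Real.exp (L - ρ) + (L - ρ) * (T - 1) := by
          nlinarith [mul_pos hcρ (Real.exp_pos (-L))]
      _ ≤ Real.exp ((L - ρ) * T) := exp_add_mul_le_exp_mul (by linarith) hT
  calc c * (2 * M * K₂ + M ^ 2 / ρ) = (2 * c * K₂ + c / ρ * M) * M := by ring
    _ ≤ Real.exp ((L - ρ) * T) * M := by gcongr
    _ = Real.exp (-ρ * T) / Real.exp (-L * T) * M := by rw [← Real.exp_sub]; ring_nf

end Constants

theorem uniform_localization_below_general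
    (ρ c x₀ K₁ K₂ L : ℝ) (b₀ : NNReal) (F : ℝ → ℝ)
    (hρ : 0 < ρ) (hc : 0 < c) (hx₀ : 0 ≤ x₀)
    (hanti : Antitone F) (hlip : LipschitzWith b₀ F) (hF0 : 0 ≤ F 0)
    (hK₁ : 1 ≤ K₁) (hL : ρ + 2 * c / ρ < L)
    (hLineq : 2 * c * K₂ ≤ Real.exp (L - ρ) - (2 * c / ρ) * Real.exp (-L)) :
    ∀ T : ℝ, 1 ≤ T → ∀ β : ℝ, 0 < β → Real.log β + b₀ * β = -T * b₀ →
    ∀ η N : ℝ, η = Real.exp (-L * T) → N = K₁ * β⁻¹ ^ 2 * Real.exp (2 * ρ * (T + β)) →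
      η < N ∧
      ∀ u x : ℝ → ℝ, Admissible u → Trajectory F x₀ u x →
        IntegrableOn (fun t ↦ Real.exp (-ρ * t) * u t) (Ioi 0) →
        (∫ t in Ioi 0, Real.exp (-ρ * t) * u t) ≤ K₁ →
        IntegrableOn (fun t ↦ Real.exp (-ρ * t) * x t) (Ioi 0) →
        (∫ t in Ioi 0, Real.exp (-ρ * t) * x t) ≤ K₂ →
        ObjIntegrable ρ c u x →
        ∃ u' x' : ℝ → ℝ,
          Admissible u' ∧ Trajectory F x₀ u' x' ∧
          (∀ᵐ t ∂(volume.restrict (Icc 0 T)), u' t = max (min (u t) N) η) ∧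
          ObjIntegrable ρ c u' x' ∧
          objective ρ c u x ≤ objective ρ c u' x' := by
  intro T hT β hβ hβlog η N hη hN
  have hT0 : 0 < T := one_pos.trans_le hT
  have hL0 : 0 < L := lt_trans (by positivity) hL
  have hβexp : β = Real.exp (-b₀ * (T + β)) := eq_exp_neg_of_log_add_mul_eq hβ hβlog
  have hβ1 : β ≤ 1 := hβexp.trans_le <| Real.exp_le_one_iff.2 <|
    mul_nonpos_of_nonpos_of_nonneg (neg_nonpos.2 b₀.2) (by positivity)
  have hη0 : 0 < η := hη ▸ Real.exp_pos _
  have hηN : η < N := hη ▸ hN ▸ exp_neg_mul_lt_mul_exp hρ.le hL0 hK₁ hT0 hβ hβ1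
  refine ⟨hηN, fun u x hu hx hexpu huK hexpx hxK hobj ↦ ?_⟩
  have huloc := hu.locallyIntegrableOn
  have hu' : Admissible (localizedControl η N T β u) := hu.localizedControl hη0 hηN.le hβ.le
  obtain ⟨x', hx'⟩ := exists_trajectory x₀ hlip hu'.locallyIntegrableOn
  have hx'0 : ∀ t ∈ Ioi (0 : ℝ), 0 ≤ x' t := fun t ht ↦ hx'.nonneg hlip.continuous hanti hF0 hx₀
    hu'.locallyIntegrableOn (hu'.2.2.mono fun _ ↦ le_of_lt) (mem_Ioi.1 ht).le
  have hxx' : ∀ t ∈ Ioi (0 : ℝ), x' t ≤ x t + ∫ r, shortfall η T u r := fun t ht ↦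
    hx.le_add_integral_shortfall hx' hanti hlip huloc hT0.le hβexp (mem_Ioi.1 ht).le
  have hM : ∫ r, shortfall η T u r ≤ η * T :=
    integral_shortfall_le hη0.le hT0.le huloc (hu.2.2.mono fun _ ↦ le_of_lt)
  have hloss := hη ▸ mul_state_loss_le hρ hc hL hLineq hT (integral_nonneg shortfall_nonneg)
    (hη ▸ hM)
  refine ⟨localizedControl η N T β u, x', hu', hx', ?_,
    objIntegrable_localizedControl_and_objective_le hu hη0 hηN.le hT0.le hβ hβ1 hρ hc
      (one_pos.trans_le hK₁) hN hexpu huK hexpx hxK hobj hx.1 hx'.1 hx'0 rfl hxx' hloss⟩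
  filter_upwards [ae_restrict_mem measurableSet_Icc] with t ht using
    localizedControl_of_mem_Icc hηN.le ht

/-- Uniform localization from below: a control in a maximizing sequence can be
truncated above by `N(T)` and below by `η(T) = e^{-LT}` on `[0,T]` without
decreasing the objective value. -/
theorem uniform_localization_below
    (ρ c x₀ b₀ K₁ K₂ L : ℝ) (F : ℝ → ℝ)
    (hρ : 0 < ρ) (hc : 0 < c) (hx₀ : 0 ≤ x₀) (hb₀ : 0 < b₀)
    (hF : ContDiff ℝ 1 F) (hF0 : F 0 = 0)
    (hF' : ∀ y : ℝ, -b₀ ≤ deriv F y ∧ deriv F y ≤ 0)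
    (hK₁ : 1 ≤ K₁) (hK₂ : 0 < K₂)
    (hL : ρ + 2 * c / ρ < L)
    (hLineq : 2 * c * K₂ ≤ Real.exp (L - ρ) - (2 * c / ρ) * Real.exp (-L)) :
    ∀ T : ℝ, 1 ≤ T → ∀ β : ℝ, 0 < β → Real.log β + b₀ * β = -T * b₀ →
    ∀ η N : ℝ, η = Real.exp (-L * T) → N = K₁ * β⁻¹ ^ 2 * Real.exp (2 * ρ * (T + β)) →
      η < N ∧
      ∀ u x : ℝ → ℝ, Admissible u → Trajectory F x₀ u x →
        IntegrableOn (fun t => Real.exp (-ρ * t) * u t) (Set.Ioi (0:ℝ)) →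
        (∫ t in Set.Ioi (0:ℝ), Real.exp (-ρ * t) * u t) ≤ K₁ →
        IntegrableOn (fun t => Real.exp (-ρ * t) * x t) (Set.Ioi (0:ℝ)) →
        (∫ t in Set.Ioi (0:ℝ), Real.exp (-ρ * t) * x t) ≤ K₂ →
        ObjIntegrable ρ c u x →
        ∃ u' x' : ℝ → ℝ,
          Admissible u' ∧ Trajectory F x₀ u' x' ∧
          (∀ᵐ t ∂(volume.restrict (Set.Icc (0:ℝ) T)), u' t = max (min (u t) N) η) ∧
          ObjIntegrable ρ c u' x' ∧
          objective ρ c u x ≤ objective ρ c u' x' := by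
  lift b₀ to NNReal using hb₀.le
  have hdiff : Differentiable ℝ F := hF.differentiable one_ne_zero
  refine uniform_localization_below_general ρ c x₀ K₁ K₂ L b₀ F hρ hc hx₀
    (antitone_of_deriv_nonpos hdiff fun y ↦ (hF' y).2)
    (lipschitzWith_of_nnnorm_deriv_le hdiff fun y ↦ ?_) hF0.ge hK₁ hL hLineq
  exact abs_le.2 ⟨(hF' y).1, (hF' y).2.trans b₀.2⟩
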